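/- arXiv:1102.0659 — 8 statements merged into one kernel-verified Lean document; each statement's English description precedes it below -/
import Mathlib

section
/- Let n be a natural number and let (u_k), (v_k), (w_k) be sequences of complex numbers with u_k − v_k = w_k for all k, such that w_0 ≠ 0 and v_k ≠ 0 for 1 ≤ k ≤ n. Then ∑_{k=0}^{n} (w_k / w_0) · (u_0 u_1 ⋯ u_{k−1}) / (v_1 v_2 ⋯ v_k) = (1 / w_0) · (u_0 u_1 ⋯ u_n / (v_1 ⋯ v_n) − v_0), where empty products are taken to be 1. -/
/-!
Put `t k = (u 0 ⋯ u (k - 1)) / (v 1 ⋯ v k)`. Since `v (k + 1) * t (k + 1) = u k * t k`, each summand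
`w k * t k = u k * t k - v k * t k` cancels against its neighbours, leaving only `u n * t n` and
`v 0 * t 0 = v 0`.
-/

theorem sum_range_succ_sub_mul_of_mul_succ_eq {R : Type*} [NonUnitalNonAssocRing R]
    {u v t : ℕ → R} {n : ℕ} (h : ∀ k < n, v (k + 1) * t (k + 1) = u k * t k) :
    ∑ k ∈ Finset.range (n + 1), (u k - v k) * t k = u n * t n - v 0 * t 0 := by
  have hshift : ∑ k ∈ Finset.range n, v (k + 1) * t (k + 1) = ∑ k ∈ Finset.range n, u k * t k :=
    Finset.sum_congr rfl fun k hk => h k (Finset.mem_range.mp hk)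
  simp only [sub_mul, Finset.sum_sub_distrib]
  rw [Finset.sum_range_succ, Finset.sum_range_succ' (fun k => v k * t k), hshift,
    add_sub_add_left_eq_sub]

theorem mul_prod_range_succ_div_prod_Icc_succ {G₀ : Type*} [CommGroupWithZero G₀] (u v : ℕ → G₀)
    {k : ℕ} (hv : v (k + 1) ≠ 0) :
    v (k + 1) * ((∏ j ∈ Finset.range (k + 1), u j) / ∏ j ∈ Finset.Icc 1 (k + 1), v j) =
      u k * ((∏ j ∈ Finset.range k, u j) / ∏ j ∈ Finset.Icc 1 k, v j) := by
  rw [Finset.prod_Icc_succ_top (Nat.le_add_left 1 k), mul_comm (∏ j ∈ Finset.Icc 1 k, v j),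
    ← mul_div_assoc, mul_div_mul_left _ _ hv, Finset.prod_range_succ_comm, mul_div_assoc]

theorem euler_telescoping_lemma_general {K : Type*} [Field K] (n : ℕ) (u v w : ℕ → K)
    (huvw : ∀ k, u k - v k = w k) (hv : ∀ k, 1 ≤ k → k ≤ n → v k ≠ 0) :
    ∑ k ∈ Finset.range (n + 1),
      w k * ((∏ j ∈ Finset.range k, u j) / ∏ j ∈ Finset.Icc 1 k, v j) =
      (∏ j ∈ Finset.range (n + 1), u j) / (∏ j ∈ Finset.Icc 1 n, v j) - v 0 := by
  have hrec (k : ℕ) (hk : k < n) :=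
    mul_prod_range_succ_div_prod_Icc_succ u v (hv (k + 1) (Nat.le_add_left 1 k) hk)
  simp only [← huvw]
  rw [sum_range_succ_sub_mul_of_mul_succ_eq hrec, Finset.prod_range_succ_comm, mul_div_assoc]
  simp

/-- Euler's Telescoping Lemma: if `u k - v k = w k` for all `k`, `w 0 ≠ 0`, and
`v k ≠ 0` for `1 ≤ k ≤ n`, then
`∑_{k=0}^{n} (w_k/w_0)·(u_0⋯u_{k−1})/(v_1⋯v_k) = (1/w_0)·(u_0⋯u_n/(v_1⋯v_n) − v_0)`. -/
theorem euler_telescoping_lemma (n : ℕ) (u v w : ℕ → ℂ)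
    (huvw : ∀ k, u k - v k = w k) (hw0 : w 0 ≠ 0)
    (hv : ∀ k, 1 ≤ k → k ≤ n → v k ≠ 0) :
    ∑ k ∈ Finset.range (n + 1),
      (w k / w 0) * (∏ j ∈ Finset.range k, u j) / (∏ j ∈ Finset.Icc 1 k, v j)
      = (1 / w 0) *
        ((∏ j ∈ Finset.range (n + 1), u j) / (∏ j ∈ Finset.Icc 1 n, v j) - v 0) := by
  rw [← euler_telescoping_lemma_general n u v w huvw hv, Finset.mul_sum]
  exact Finset.sum_congr rfl fun k _ => by ring
end

section
/- Let n be a natural number, let x be a nonzero complex number, and let (a_k)_{k≥1} be a sequence of complex numbers with x + a_k ≠ 0 for 1 ≤ k ≤ n+1. Then ∑_{k=0}^{n} (a_1 a_2 ⋯ a_k) / ((x+a_1)(x+a_2) ⋯ (x+a_{k+1})) = 1/x − (a_1 a_2 ⋯ a_{n+1}) / (x (x+a_1)(x+a_2) ⋯ (x+a_{n+1})), where the empty product a_1 ⋯ a_0 is 1. -/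
/-!
The quotients `(a₁ ⋯ aₖ) / (c₁ ⋯ cₖ)` telescope: the difference of the `k`-th and the `(k+1)`-st is
`(cₖ₊₁ - aₖ₊₁) (a₁ ⋯ aₖ) / (c₁ ⋯ cₖ₊₁)`. For `cⱼ = x + aⱼ` the factor `cₖ₊₁ - aₖ₊₁` is the
constant `x`, so dividing the telescoped sum by `x` gives the identity.
-/

section Telescoping

variable {K : Type*} [Field K]

theorem prod_Icc_div_prod_Icc_sub_succ (a c : ℕ → K) {k : ℕ} (hc : c (k + 1) ≠ 0) :
    (∏ j ∈ Finset.Icc 1 k, a j) / (∏ j ∈ Finset.Icc 1 k, c j) -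
        (∏ j ∈ Finset.Icc 1 (k + 1), a j) / (∏ j ∈ Finset.Icc 1 (k + 1), c j) =
      (c (k + 1) - a (k + 1)) *
        ((∏ j ∈ Finset.Icc 1 k, a j) / (∏ j ∈ Finset.Icc 1 (k + 1), c j)) := by
  have hk : 1 ≤ k + 1 := Nat.le_add_left 1 k
  rw [Finset.prod_Icc_succ_top hk a, Finset.prod_Icc_succ_top hk c]
  field_simp

theorem sum_range_sub_mul_prod_Icc_div_prod_Icc (a c : ℕ → K) (n : ℕ)
    (hc : ∀ k, 1 ≤ k → k ≤ n → c k ≠ 0) :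
    ∑ k ∈ Finset.range n, (c (k + 1) - a (k + 1)) *
        ((∏ j ∈ Finset.Icc 1 k, a j) / (∏ j ∈ Finset.Icc 1 (k + 1), c j)) =
      1 - (∏ j ∈ Finset.Icc 1 n, a j) / (∏ j ∈ Finset.Icc 1 n, c j) := by
  let q : ℕ → K := fun k ↦ (∏ j ∈ Finset.Icc 1 k, a j) / (∏ j ∈ Finset.Icc 1 k, c j)
  have hq_zero : q 0 = 1 := by simp [q]
  calc
    _ = ∑ k ∈ Finset.range n, (q k - q (k + 1)) :=
      Finset.sum_congr rfl fun k hk ↦ (prod_Icc_div_prod_Icc_sub_succ a c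
        (hc (k + 1) (Nat.le_add_left 1 k) (Finset.mem_range.mp hk))).symm
    _ = q 0 - q n := Finset.sum_range_sub' q n
    _ = 1 - q n := by rw [hq_zero]

theorem ramanujan_identity_general (n : ℕ) {x : K} (hx : x ≠ 0) (a : ℕ → K)
    (ha : ∀ k, 1 ≤ k → k ≤ n → x + a k ≠ 0) :
    ∑ k ∈ Finset.range n,
        (∏ j ∈ Finset.Icc 1 k, a j) / (∏ j ∈ Finset.Icc 1 (k + 1), (x + a j)) =
      1 / x - (∏ j ∈ Finset.Icc 1 n, a j) / (x * ∏ j ∈ Finset.Icc 1 n, (x + a j)) := by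
  have h := sum_range_sub_mul_prod_Icc_div_prod_Icc a (fun j ↦ x + a j) n ha
  simp only [add_sub_cancel_right, ← Finset.mul_sum] at h
  rw [eq_div_of_mul_eq hx ((mul_comm _ x).trans h), sub_div, div_div, mul_comm x]

end Telescoping

/-- Ramanujan's identity (Entry 25, Chapter 4 of Ramanujan's Notebooks):
`∑_{k=0}^{n} (a_1⋯a_k)/((x+a_1)⋯(x+a_{k+1})) = 1/x − (a_1⋯a_{n+1})/(x(x+a_1)⋯(x+a_{n+1}))`. -/
theorem ramanujan_identity (n : ℕ) (x : ℂ) (hx : x ≠ 0) (a : ℕ → ℂ)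
    (ha : ∀ k, 1 ≤ k → k ≤ n + 1 → x + a k ≠ 0) :
    ∑ k ∈ Finset.range (n + 1),
      (∏ j ∈ Finset.Icc 1 k, a j) / (∏ j ∈ Finset.Icc 1 (k + 1), (x + a j))
      = 1 / x -
        (∏ j ∈ Finset.Icc 1 (n + 1), a j) /
          (x * ∏ j ∈ Finset.Icc 1 (n + 1), (x + a j)) :=
  ramanujan_identity_general (n + 1) hx a ha
end

section
/- Let n be a natural number and let a, b be complex numbers such that (b)_k ≠ 0 for 0 ≤ k ≤ n and (b)_n ≠ 0. Then ∑_{k=0}^{n} ((a)_k (−n)_k) / ((b)_k k!) = (b−a)_n / (b)_n. -/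
/-- The rising factorial `(x)_m = x(x+1)⋯(x+m−1)`, with `(x)_0 = 1`. -/
def risingFactorial (x : ℂ) (m : ℕ) : ℂ := ∏ i ∈ Finset.range m, (x + i)

/-!
Multiplied by `(b)_n = (b)_k (b + k)_{n - k}`, the sum loses its denominators and becomes
`(b - a)_n = ∑ (n choose k) (-1)^k (a)_k (b + k)_{n - k}`. This is Vandermonde's identity for the
falling factorials of `-a` and `b + n - 1`: the falling factorial of order `k` of `-a` is
`(-1)^k (a)_k`, that of order `n - k` of `b + n - 1` is `(b + k)_{n - k}`, and that of order `n`
of their sum is `(b - a)_n`.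
-/

open Polynomial Finset
open scoped Nat

section CommSemiring

variable {R : Type*} [CommSemiring R]

lemma ascPochhammer_eval_eq_prod_range (n : ℕ) (r : R) :
    (ascPochhammer R n).eval r = ∏ i ∈ range n, (r + i) := by
  induction n with
  | zero => simp
  | succ n ih => rw [ascPochhammer_succ_eval, ih, prod_range_succ]

lemma ascPochhammer_eval_mul_eval_add (n m : ℕ) (r : R) :
    (ascPochhammer R n).eval r * (ascPochhammer R m).eval (r + n) =
      (ascPochhammer R (n + m)).eval r := by
  simp only [← ascPochhammer_mul, eval_mul, eval_comp, eval_add, eval_X, eval_natCast]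

end CommSemiring

section Ring

variable {R : Type*} [Ring R]

lemma ascPochhammer_eval_neg_natCast (n k : ℕ) :
    (ascPochhammer R k).eval (-(n : R)) = (-1) ^ k * (k ! * n.choose k) := by
  rw [ascPochhammer_eval_neg_eq_descPochhammer, descPochhammer_eval_eq_descFactorial,
    Nat.descFactorial_eq_factorial_mul_choose, Nat.cast_mul]

lemma descPochhammer_eval_neg_eq_ascPochhammer (k : ℕ) (r : R) :
    (descPochhammer R k).eval (-r) = (-1) ^ k * (ascPochhammer R k).eval r := by
  have hneg := ascPochhammer_eval_neg_eq_descPochhammer R (-r) k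
  rw [neg_neg] at hneg
  rw [hneg, ← mul_assoc, ← pow_add, Even.neg_one_pow ⟨k, rfl⟩, one_mul]

lemma descPochhammer_smeval_eq_eval (k : ℕ) (r : R) :
    (descPochhammer ℤ k).smeval r = (descPochhammer R k).eval r := by
  rw [descPochhammer_smeval_eq_ascPochhammer, ascPochhammer_smeval_eq_eval,
    descPochhammer_eval_eq_ascPochhammer]

lemma ascPochhammer_eval_sub {a b : R} (n : ℕ) (h : Commute a b) :
    (ascPochhammer R n).eval (b - a) = ∑ ij ∈ antidiagonal n, n.choose ij.1 *
      ((-1) ^ ij.1 * (ascPochhammer R ij.1).eval a * (ascPochhammer R ij.2).eval (b + ij.1)) := by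
  have hcomm : Commute (-a) (b + n - 1) :=
    ((h.add_right (Nat.commute_cast a n)).sub_right (Commute.one_right a)).neg_left
  have hsub : b - a = -a + (b + n - 1) - n + 1 := by abel
  rw [hsub, ← descPochhammer_eval_eq_ascPochhammer, ← descPochhammer_smeval_eq_eval,
    Ring.descPochhammer_smeval_add n hcomm]
  refine sum_congr rfl fun ij hij ↦ ?_
  have hshift : b + n - 1 - ij.2 + 1 = b + ij.1 := by
    rw [← mem_antidiagonal.mp hij, Nat.cast_add]
    abel
  rw [descPochhammer_smeval_eq_eval, descPochhammer_smeval_eq_eval,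
    descPochhammer_eval_neg_eq_ascPochhammer, descPochhammer_eval_eq_ascPochhammer, hshift]

end Ring

theorem chu_vandermonde_general {K : Type*} [Field K] (n : ℕ) (a b : K) (hn : (n ! : K) ≠ 0)
    (hb : (ascPochhammer K n).eval b ≠ 0) :
    ∑ k ∈ range (n + 1), ((ascPochhammer K k).eval a * (ascPochhammer K k).eval (-(n : K))) /
        ((ascPochhammer K k).eval b * (k ! : K)) =
      (ascPochhammer K n).eval (b - a) / (ascPochhammer K n).eval b := by
  rw [ascPochhammer_eval_sub n (Commute.all a b), sum_div,
    Finset.Nat.sum_antidiagonal_eq_sum_range_succ_mk]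
  refine sum_congr rfl fun k hk ↦ ?_
  have hkn : k ≤ n := mem_range_succ_iff.mp hk
  have hfact : (k ! : K) ≠ 0 :=
    ne_zero_of_dvd_ne_zero hn (Nat.cast_dvd_cast (Nat.factorial_dvd_factorial hkn))
  have hsplit : (ascPochhammer K k).eval b * (ascPochhammer K (n - k)).eval (b + k) =
      (ascPochhammer K n).eval b := by
    rw [ascPochhammer_eval_mul_eval_add, Nat.add_sub_of_le hkn]
  rw [← hsplit] at hb ⊢
  obtain ⟨hbk, hbnk⟩ := mul_ne_zero_iff.mp hb
  rw [ascPochhammer_eval_neg_natCast]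
  field_simp

lemma risingFactorial_eq_ascPochhammer_eval (x : ℂ) (m : ℕ) :
    risingFactorial x m = (ascPochhammer ℂ m).eval x :=
  (ascPochhammer_eval_eq_prod_range m x).symm

/-- The Chu–Vandermonde sum:
`∑_{k=0}^{n} (a)_k (−n)_k / ((b)_k k!) = (b−a)_n / (b)_n`. -/
theorem chu_vandermonde (n : ℕ) (a b : ℂ)
    (hb : ∀ k ≤ n, risingFactorial b k ≠ 0) :
    ∑ k ∈ Finset.range (n + 1),
      (risingFactorial a k * risingFactorial (-(n : ℂ)) k) /
        (risingFactorial b k * (k.factorial : ℂ))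
      = risingFactorial (b - a) n / risingFactorial b n := by
  simp only [risingFactorial_eq_ascPochhammer_eval] at hb ⊢
  exact chu_vandermonde_general n a b (Nat.cast_ne_zero.mpr n.factorial_ne_zero) (hb n le_rfl)
end

section
/- Let n be a natural number and let q, z be complex numbers such that (q;q)_k ≠ 0 for 0 ≤ k ≤ n. Then ∑_{k=0}^{n} ((q^{−n};q)_k / (q;q)_k) · (z q^n)^k = (z;q)_n. -/
/-- The q-shifted factorial `(a;q)_m = (1−a)(1−aq)⋯(1−a q^{m−1})`, with `(a;q)_0 = 1`. -/
def qShiftedFactorial (a q : ℂ) (m : ℕ) : ℂ := ∏ i ∈ Finset.range m, (1 - a * q ^ i)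

/-!
Regard `(X;q)_n` as a polynomial in `X`. Multiplying by the last factor `1 - X q^n` turns its
coefficients `c n k` into `c (n + 1) (k + 1) = c n (k + 1) - q^n c n k`. The products
`∏_{i<k} (q^n - q^i)` satisfy the same recursion up to the factor `(q;q)_k`, so
`(q;q)_k c n k = ∏_{i<k} (q^n - q^i)`, an identity without denominators that holds in every
commutative ring. When `q` is invertible the right-hand side is `(q^{-n};q)_k q^{nk}`.
-/

section

open Finset Polynomial

/-- The q-shifted factorial `(a;q)_m` in a commutative ring, so that it can be formed both for
field elements and for the polynomial `a = X`. -/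
def qPochhammer {R : Type*} [CommRing R] (a q : R) (m : ℕ) : R :=
  ∏ i ∈ range m, (1 - a * q ^ i)

section CommRing

variable {R : Type*} [CommRing R]

theorem qPochhammer_zero (a q : R) : qPochhammer a q 0 = 1 :=
  prod_range_zero _

theorem qPochhammer_succ (a q : R) (m : ℕ) :
    qPochhammer a q (m + 1) = qPochhammer a q m * (1 - a * q ^ m) :=
  prod_range_succ _ _

theorem qPochhammer_dvd_qPochhammer (a q : R) {k n : ℕ} (hkn : k ≤ n) :
    qPochhammer a q k ∣ qPochhammer a q n :=
  prod_dvd_prod_of_subset _ _ _ (range_mono hkn)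

theorem eval_qPochhammer_X_C (q z : R) (n : ℕ) :
    (qPochhammer X (C q) n).eval z = qPochhammer z q n := by
  simp [qPochhammer, eval_prod]

theorem natDegree_qPochhammer_X_C_le (q : R) (n : ℕ) :
    (qPochhammer X (C q) n).natDegree ≤ n := by
  have natDegree_factor_le (i : ℕ) : (1 - X * C q ^ i : R[X]).natDegree ≤ 1 := by
    compute_degree
  calc (qPochhammer X (C q) n).natDegree
      ≤ ∑ i ∈ range n, (1 - X * C q ^ i : R[X]).natDegree := natDegree_prod_le _ _
    _ ≤ ∑ _i ∈ range n, 1 := sum_le_sum fun i _ => natDegree_factor_le i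
    _ = n := by simp

theorem coeff_zero_qPochhammer_X_C (q : R) (n : ℕ) :
    (qPochhammer X (C q) n).coeff 0 = 1 := by
  rw [coeff_zero_eq_eval_zero, eval_qPochhammer_X_C]
  simp [qPochhammer]

theorem coeff_succ_qPochhammer_X_C_succ (q : R) (n k : ℕ) :
    (qPochhammer X (C q) (n + 1)).coeff (k + 1) =
      (qPochhammer X (C q) n).coeff (k + 1) - q ^ n * (qPochhammer X (C q) n).coeff k := by
  rw [qPochhammer_succ, mul_sub, mul_one, coeff_sub, ← mul_assoc, ← C_pow, coeff_mul_C,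
    coeff_mul_X, mul_comm (q ^ n)]

theorem prod_range_succ_mul_sub_pow (a q : R) (k : ℕ) :
    ∏ i ∈ range (k + 1), (q * a - q ^ i) =
      (q * a - 1) * (q ^ k * ∏ i ∈ range k, (a - q ^ i)) := by
  have factor_q (i : ℕ) : q * a - q ^ (i + 1) = q * (a - q ^ i) := by ring
  simp only [prod_range_succ', factor_q, prod_mul_distrib, prod_const, card_range, pow_zero]
  ring

theorem qPochhammer_self_mul_coeff_qPochhammer_X_C (q : R) (n k : ℕ) :
    qPochhammer q q k * (qPochhammer X (C q) n).coeff k = ∏ i ∈ range k, (q ^ n - q ^ i) := by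
  induction n generalizing k with
  | zero =>
    cases k with
    | zero => simp [qPochhammer_zero]
    | succ k => simp [qPochhammer_zero, coeff_one, prod_range_succ']
  | succ n ih =>
    cases k with
    | zero => simp [qPochhammer_zero, coeff_zero_qPochhammer_X_C]
    | succ k =>
      calc qPochhammer q q (k + 1) * (qPochhammer X (C q) (n + 1)).coeff (k + 1)
          = qPochhammer q q (k + 1) * (qPochhammer X (C q) n).coeff (k + 1) -
              q ^ n * (1 - q * q ^ k) *
                (qPochhammer q q k * (qPochhammer X (C q) n).coeff k) := by
            rw [coeff_succ_qPochhammer_X_C_succ, qPochhammer_succ]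
            ring
        _ = (q * q ^ n - 1) * (q ^ k * ∏ i ∈ range k, (q ^ n - q ^ i)) := by
            rw [ih, ih, prod_range_succ]
            ring
        _ = ∏ i ∈ range (k + 1), (q ^ (n + 1) - q ^ i) := by
            rw [← prod_range_succ_mul_sub_pow, pow_succ']

end CommRing

section Field

variable {K : Type*} [Field K]

theorem qPochhammer_inv_mul_pow {a : K} (ha : a ≠ 0) (q : K) (k : ℕ) :
    qPochhammer a⁻¹ q k * a ^ k = ∏ i ∈ range k, (a - q ^ i) := by
  have clear_inv (i : ℕ) : (1 - a⁻¹ * q ^ i) * a = a - q ^ i := by field_simp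
  rw [qPochhammer, ← prod_congr rfl fun i _ => clear_inv i, prod_mul_distrib, prod_const,
    card_range]

theorem coeff_qPochhammer_X_C {q : K} (hq : q ≠ 0) (n : ℕ) {k : ℕ}
    (hqk : qPochhammer q q k ≠ 0) :
    (qPochhammer X (C q) n).coeff k =
      qPochhammer (q ^ (-(n : ℤ))) q k / qPochhammer q q k * (q ^ n) ^ k := by
  rw [div_mul_eq_mul_div, eq_div_iff hqk, mul_comm, qPochhammer_self_mul_coeff_qPochhammer_X_C,
    zpow_neg, zpow_natCast, qPochhammer_inv_mul_pow (pow_ne_zero n hq)]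

theorem q_binomial_theorem_general (n : ℕ) (q z : K) (hq : q ≠ 0)
    (hqn : qPochhammer q q n ≠ 0) :
    ∑ k ∈ range (n + 1),
      (qPochhammer (q ^ (-(n : ℤ))) q k / qPochhammer q q k) * (z * q ^ n) ^ k
      = qPochhammer z q n := by
  rw [← eval_qPochhammer_X_C,
    eval_eq_sum_range' (Nat.lt_succ_of_le (natDegree_qPochhammer_X_C_le q n))]
  refine sum_congr rfl fun k hk => ?_
  have hqk : qPochhammer q q k ≠ 0 :=
    ne_zero_of_dvd_ne_zero hqn
      (qPochhammer_dvd_qPochhammer q q (Nat.le_of_lt_succ (mem_range.mp hk)))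
  rw [coeff_qPochhammer_X_C hq n hqk, mul_pow, mul_comm (z ^ k), mul_assoc]

end Field

end

/-- The terminating q-binomial theorem:
`∑_{k=0}^{n} ((q^{−n};q)_k / (q;q)_k) · (z q^n)^k = (z;q)_n`. -/
theorem q_binomial_theorem (n : ℕ) (q z : ℂ) (hq : q ≠ 0)
    (hqq : ∀ k ≤ n, qShiftedFactorial q q k ≠ 0) :
    ∑ k ∈ Finset.range (n + 1),
      (qShiftedFactorial (q ^ (-(n : ℤ))) q k / qShiftedFactorial q q k) *
        (z * q ^ n) ^ k
      = qShiftedFactorial z q n :=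
  q_binomial_theorem_general n q z hq (hqq n le_rfl)
end

section
/- Let n be a natural number and let q, a, b, c, d be nonzero complex numbers with a ≠ 1, such that all the q-shifted factorials appearing in the denominators below are nonzero for 0 ≤ k ≤ n. Then ∑_{k=0}^{n} ((1−a q^{2k})/(1−a)) · ((a;q)_k (b;q)_k (c;q)_k (d;q)_k (a²q^{n+1}/(bcd);q)_k (q^{−n};q)_k) / ((aq/b;q)_k (aq/c;q)_k (aq/d;q)_k (bcd q^{−n}/a;q)_k (a q^{n+1};q)_k (q;q)_k) · q^k = ((aq;q)_n (aq/(bc);q)_n (aq/(bd);q)_n (aq/(cd);q)_n) / ((aq/b;q)_n (aq/c;q)_n (aq/d;q)_n (aq/(bcd);q)_n). -/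
/-!
Write `W(e, f)` for the very-well-poised series with parameters `a; b, c, d, e, f`. If
`b c d e f = a²`, the series `W(e q, f)` and `W(e, f q)` are both balanced, and a combination of
them antisymmetric in `e` and `f` telescopes, its partial sums being products. For
`f = q^{-(n+1)}` these are the Jackson sums of orders `n + 1` and `n`, and the closed form vanishes
because `f q = q^{-n}`; so the sum satisfies the first-order recurrence in `n` of the product side.
The recurrence divides by quantities that may vanish under the hypotheses of the theorem, but only
for finitely many `a`. Both sides are continuous in `a`, so the identity extends to these.
-/

open Finset Filter Topology

variable {q a b c d e f : ℂ} {m n : ℕ}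

theorem qShiftedFactorial_zero (z q : ℂ) : qShiftedFactorial z q 0 = 1 :=
  prod_range_zero _

theorem qShiftedFactorial_succ (z q : ℂ) (m : ℕ) :
    qShiftedFactorial z q (m + 1) = qShiftedFactorial z q m * (1 - z * q ^ m) :=
  prod_range_succ _ _

theorem qShiftedFactorial_succ' (z q : ℂ) (m : ℕ) :
    qShiftedFactorial z q (m + 1) = (1 - z) * qShiftedFactorial (z * q) q m := by
  simp only [qShiftedFactorial, prod_range_succ', pow_zero, mul_one, pow_succ', mul_assoc,
    mul_comm (1 - z)]

theorem qShiftedFactorial_ne_zero {z : ℂ} (h : ∀ i < m, z * q ^ i ≠ 1) :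
    qShiftedFactorial z q m ≠ 0 :=
  prod_ne_zero_iff.2 fun i hi => sub_ne_zero.2 (h i (mem_range.1 hi)).symm

theorem qShiftedFactorial_mul_div_succ (a z q : ℂ) (m : ℕ) :
    qShiftedFactorial (a * q / z) q (m + 1) =
      qShiftedFactorial (a * q / z) q m * (1 - a * q ^ (m + 1) / z) := by
  rw [qShiftedFactorial_succ, div_mul_eq_mul_div, mul_assoc, ← pow_succ']

theorem qShiftedFactorial_mul_div_ne_zero {z : ℂ} (hz : z ≠ 0)
    (h : ∀ j ≤ m, a * q ^ j ≠ z) : qShiftedFactorial (a * q / z) q m ≠ 0 := by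
  refine qShiftedFactorial_ne_zero fun i hi => ?_
  rw [div_mul_eq_mul_div, mul_assoc, ← pow_succ', Ne, div_eq_one_iff_eq hz]
  exact h (i + 1) hi

theorem qShiftedFactorial_zpow_neg_eq_zero (hq : q ≠ 0) (h : n < m) :
    qShiftedFactorial (q ^ (-(n : ℤ))) q m = 0 :=
  prod_eq_zero (mem_range.2 h) <| by
    rw [zpow_neg, zpow_natCast, inv_mul_cancel₀ (pow_ne_zero n hq), sub_self]

@[fun_prop]
theorem continuous_qShiftedFactorial (q : ℂ) (m : ℕ) :
    Continuous fun z => qShiftedFactorial z q m := by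
  unfold qShiftedFactorial
  fun_prop

/-- The `k`-th term of the very-well-poised series `₈φ₇` with argument `q`, in which a numerator
parameter `z` is paired with the denominator parameter `a * q / z`. -/
noncomputable def veryWellPoisedTerm (q a b c d e f : ℂ) (k : ℕ) : ℂ :=
  (1 - a * q ^ (2 * k)) / (1 - a) *
    ((qShiftedFactorial a q k * qShiftedFactorial b q k * qShiftedFactorial c q k *
        qShiftedFactorial d q k * qShiftedFactorial e q k * qShiftedFactorial f q k) /
      (qShiftedFactorial (a * q / b) q k * qShiftedFactorial (a * q / c) q k *
        qShiftedFactorial (a * q / d) q k * qShiftedFactorial (a * q / e) q k *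
        qShiftedFactorial (a * q / f) q k * qShiftedFactorial q q k)) * q ^ k

theorem veryWellPoisedTerm_zero (ha1 : a ≠ 1) : veryWellPoisedTerm q a b c d e f 0 = 1 := by
  simp [veryWellPoisedTerm, qShiftedFactorial_zero, sub_ne_zero.2 ha1.symm]

theorem veryWellPoisedTerm_swap (q a b c d e f : ℂ) (k : ℕ) :
    veryWellPoisedTerm q a b c d e f k = veryWellPoisedTerm q a b c d f e k := by
  simp only [veryWellPoisedTerm, mul_right_comm _ (qShiftedFactorial e q k),
    mul_right_comm _ (qShiftedFactorial (a * q / e) q k)]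

/-- The coefficient of the series with parameters `e * q, f` in the relation between the balanced
very-well-poised series with parameters `e * q, f` and `e, f * q`; that of the other series is
obtained by exchanging `e` and `f`. -/
noncomputable def contiguousCoeff (a b c d e f : ℂ) : ℂ :=
  f * (1 - a / e) * (1 - a / (b * f)) * (1 - a / (c * f)) * (1 - a / (d * f))

/-- Up to the factor `f - e`, the closed form of the partial sum over `k ≤ m` of the combination
of two contiguous very-well-poised series with coefficients `contiguousCoeff`. -/
noncomputable def contiguousPartialSum (q a b c d e f : ℂ) (m : ℕ) : ℂ :=
  (qShiftedFactorial (a * q) q m * qShiftedFactorial b q (m + 1) * qShiftedFactorial c q (m + 1) *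
      qShiftedFactorial d q (m + 1) * qShiftedFactorial (e * q) q m *
      qShiftedFactorial (f * q) q m) /
    (qShiftedFactorial (a * q / b) q m * qShiftedFactorial (a * q / c) q m *
      qShiftedFactorial (a * q / d) q m * qShiftedFactorial (a * q / e) q m *
      qShiftedFactorial (a * q / f) q m * qShiftedFactorial q q m)

theorem contiguousPartialSum_swap (q a b c d e f : ℂ) (m : ℕ) :
    contiguousPartialSum q a b c d e f m = contiguousPartialSum q a b c d f e m := by
  simp only [contiguousPartialSum, mul_right_comm _ (qShiftedFactorial (e * q) q m),
    mul_right_comm _ (qShiftedFactorial (a * q / e) q m)]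

theorem contiguousPartialSum_zero :
    contiguousPartialSum q a b c d e f 0 = (1 - b) * (1 - c) * (1 - d) := by
  simp [contiguousPartialSum, qShiftedFactorial_zero, qShiftedFactorial_succ]

theorem contiguousPartialSum_succ (q a b c d e f : ℂ) (m : ℕ) :
    contiguousPartialSum q a b c d e f (m + 1) = contiguousPartialSum q a b c d e f m *
      ((1 - a * q ^ (m + 1)) * (1 - b * q ^ (m + 1)) * (1 - c * q ^ (m + 1)) *
          (1 - d * q ^ (m + 1)) * (1 - e * q ^ (m + 1)) * (1 - f * q ^ (m + 1)) /
        ((1 - a * q ^ (m + 1) / b) * (1 - a * q ^ (m + 1) / c) * (1 - a * q ^ (m + 1) / d) *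
          (1 - a * q ^ (m + 1) / e) * (1 - a * q ^ (m + 1) / f) * (1 - q ^ (m + 1)))) := by
  simp only [contiguousPartialSum, qShiftedFactorial_succ _ _ m,
    qShiftedFactorial_succ _ _ (m + 1), mul_assoc _ q, ← pow_succ', div_mul_div_comm]
  congr 1 <;> ring

theorem one_sub_mul_veryWellPoisedTerm_succ (hq : q ≠ 0) (ha1 : a ≠ 1) (hae : a ≠ e) (m : ℕ) :
    (1 - a / e) * veryWellPoisedTerm q a b c d (e * q) f (m + 1) =
      contiguousPartialSum q a b c d e f m *
        ((1 - a * (q ^ (m + 1)) ^ 2) * q ^ (m + 1) * ((1 - e * q ^ (m + 1)) * (1 - f)) /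
          ((1 - a * q ^ (m + 1) / b) * (1 - a * q ^ (m + 1) / c) * (1 - a * q ^ (m + 1) / d) *
            (1 - a * q ^ (m + 1) / f) * (1 - q ^ (m + 1)))) := by
  have ha1' : 1 - a ≠ 0 := sub_ne_zero.2 ha1.symm
  have hae' : 1 - a / e ≠ 0 := sub_ne_zero.2 (div_ne_one_of_ne hae).symm
  rw [veryWellPoisedTerm, contiguousPartialSum, mul_div_mul_right a e hq,
    qShiftedFactorial_succ' a, qShiftedFactorial_succ' f, qShiftedFactorial_succ' (a / e),
    div_mul_eq_mul_div a e q, pow_mul' q 2 (m + 1)]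
  simp only [qShiftedFactorial_mul_div_succ, qShiftedFactorial_succ (e * q),
    qShiftedFactorial_succ q, mul_assoc e q, ← pow_succ']
  have hcancel {u v : ℂ} (hu : u ≠ 0) (hv : v ≠ 0) (P y N n D δ : ℂ) :
      u * (P / v * (v * (N * n) / (u * (D * δ))) * y) = N / D * (P * y * n / δ) := by
    field_simp
  refine Eq.trans ?_ (hcancel hae' ha1' _ _ _ _ _ _)
  congr 4 <;> ring

theorem contiguousCoeff_sub_swap (hb : b ≠ 0) (hc : c ≠ 0) (hd : d ≠ 0) (he : e ≠ 0)
    (hf : f ≠ 0) (hbal : a ^ 2 = b * c * d * e * f) :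
    contiguousCoeff a b c d e f - contiguousCoeff a b c d f e =
      (f - e) * ((1 - b) * (1 - c) * (1 - d)) := by
  have ha : a ≠ 0 := by rintro rfl; simp [hb, hc, hd, he, hf] at hbal
  obtain rfl : b = a ^ 2 / (c * d * e * f) := by field_simp; linear_combination -hbal
  simp only [contiguousCoeff]
  field_simp
  ring

theorem contiguous_identity (hb : b ≠ 0) (hc : c ≠ 0) (hd : d ≠ 0) (he : e ≠ 0)
    (hf : f ≠ 0) (hbal : a ^ 2 = b * c * d * e * f) (y : ℂ) :
    f * (1 - a / (b * f)) * (1 - a / (c * f)) * (1 - a / (d * f)) * (1 - a * y ^ 2) * y *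
          (1 - e * y) * (1 - f) * (1 - a * y / e) -
        e * (1 - a / (b * e)) * (1 - a / (c * e)) * (1 - a / (d * e)) * (1 - a * y ^ 2) * y *
          (1 - f * y) * (1 - e) * (1 - a * y / f) =
      (f - e) *
        ((1 - a * y) * (1 - b * y) * (1 - c * y) * (1 - d * y) * (1 - e * y) * (1 - f * y) -
          (1 - a * y / b) * (1 - a * y / c) * (1 - a * y / d) * (1 - a * y / e) *
            (1 - a * y / f) * (1 - y)) := by
  have ha : a ≠ 0 := by rintro rfl; simp [hb, hc, hd, he, hf] at hbal
  obtain rfl : b = a ^ 2 / (c * d * e * f) := by field_simp; linear_combination -hbal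
  field_simp
  ring

theorem contiguous_identity_div (hb : b ≠ 0) (hc : c ≠ 0) (hd : d ≠ 0) (he : e ≠ 0)
    (hf : f ≠ 0) (hbal : a ^ 2 = b * c * d * e * f) {y : ℂ}
    (hden : ∀ z ∈ ({b, c, d, e, f} : Set ℂ), 1 - a * y / z ≠ 0) (hy : 1 - y ≠ 0) :
    f * (1 - a / (b * f)) * (1 - a / (c * f)) * (1 - a / (d * f)) *
          ((1 - a * y ^ 2) * y * ((1 - e * y) * (1 - f)) /
            ((1 - a * y / b) * (1 - a * y / c) * (1 - a * y / d) * (1 - a * y / f) * (1 - y))) -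
        e * (1 - a / (b * e)) * (1 - a / (c * e)) * (1 - a / (d * e)) *
          ((1 - a * y ^ 2) * y * ((1 - f * y) * (1 - e)) /
            ((1 - a * y / b) * (1 - a * y / c) * (1 - a * y / d) * (1 - a * y / e) * (1 - y))) =
      (f - e) *
        ((1 - a * y) * (1 - b * y) * (1 - c * y) * (1 - d * y) * (1 - e * y) * (1 - f * y) /
          ((1 - a * y / b) * (1 - a * y / c) * (1 - a * y / d) * (1 - a * y / e) *
            (1 - a * y / f) * (1 - y)) - 1) := by
  obtain ⟨hyb, hyc, hyd, hye, hyf⟩ := by simpa using hden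
  have hidentity := contiguous_identity hb hc hd he hf hbal y
  have hprod : (1 - a * y / b) * (1 - a * y / c) * (1 - a * y / d) * (1 - a * y / e) *
      (1 - a * y / f) * (1 - y) ≠ 0 := by
    simp only [mul_ne_zero_iff, ne_eq, not_false_eq_true, and_self, *]
  rw [div_sub_one hprod, ← mul_div_assoc (f - e), ← hidentity, sub_div,
    ← mul_div_mul_right ((1 - a * y ^ 2) * y * ((1 - e * y) * (1 - f))) _ hye,
    ← mul_div_mul_right ((1 - a * y ^ 2) * y * ((1 - f * y) * (1 - e))) _ hyf,
    ← mul_div_assoc, ← mul_div_assoc]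
  congr 2 <;> ring

theorem sum_range_contiguousCoeff_mul_sub (hq : q ≠ 0) (hb : b ≠ 0) (hc : c ≠ 0) (hd : d ≠ 0)
    (he : e ≠ 0) (hf : f ≠ 0) (ha1 : a ≠ 1) (hae : a ≠ e) (haf : a ≠ f)
    (hbal : a ^ 2 = b * c * d * e * f)
    (hden : ∀ z ∈ ({b, c, d, e, f} : Set ℂ), qShiftedFactorial (a * q / z) q m ≠ 0)
    (hqq : qShiftedFactorial q q m ≠ 0) :
    ∑ k ∈ range (m + 1),
        (contiguousCoeff a b c d e f * veryWellPoisedTerm q a b c d (e * q) f k -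
          contiguousCoeff a b c d f e * veryWellPoisedTerm q a b c d e (f * q) k) =
      (f - e) * contiguousPartialSum q a b c d e f m := by
  induction m with
  | zero =>
    rw [sum_range_one, veryWellPoisedTerm_zero ha1, veryWellPoisedTerm_zero ha1, mul_one, mul_one,
      contiguousCoeff_sub_swap hb hc hd he hf hbal, contiguousPartialSum_zero]
  | succ m ih =>
    simp only [qShiftedFactorial_mul_div_succ, qShiftedFactorial_succ q, ← pow_succ',
      mul_ne_zero_iff, forall₂_and] at hden hqq
    rw [sum_range_succ, ih hden.1 hqq.1, veryWellPoisedTerm_swap q a b c d e (f * q),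
      contiguousPartialSum_succ]
    have hupper := one_sub_mul_veryWellPoisedTerm_succ (b := b) (c := c) (d := d) (f := f)
      hq ha1 hae m
    have hlower := one_sub_mul_veryWellPoisedTerm_succ (b := b) (c := c) (d := d) (f := e)
      hq ha1 haf m
    rw [contiguousPartialSum_swap q a b c d f e] at hlower
    have hratio := contiguous_identity_div hb hc hd he hf hbal hden.2 hqq.2
    simp only [contiguousCoeff]
    linear_combination (f * (1 - a / (b * f)) * (1 - a / (c * f)) * (1 - a / (d * f))) * hupper -
      (e * (1 - a / (b * e)) * (1 - a / (c * e)) * (1 - a / (d * e))) * hlower +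
      contiguousPartialSum q a b c d e f m * hratio

/-- The left-hand side of Jackson's summation: the terminating, balanced very-well-poised series,
whose last two numerator parameters `e = a² q^{n+1} / (b c d)` and `f = q^{-n}` satisfy
`b c d e f = a² q`. -/
noncomputable def jacksonSum (q a b c d : ℂ) (n : ℕ) : ℂ :=
  ∑ k ∈ range (n + 1),
    veryWellPoisedTerm q a b c d (a ^ 2 * q ^ (n + 1) / (b * c * d)) (q ^ (-(n : ℤ))) k

/-- The right-hand side of Jackson's summation. -/
noncomputable def jacksonProduct (q a b c d : ℂ) (n : ℕ) : ℂ :=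
  (qShiftedFactorial (a * q) q n * qShiftedFactorial (a * q / (b * c)) q n *
      qShiftedFactorial (a * q / (b * d)) q n * qShiftedFactorial (a * q / (c * d)) q n) /
    (qShiftedFactorial (a * q / b) q n * qShiftedFactorial (a * q / c) q n *
      qShiftedFactorial (a * q / d) q n * qShiftedFactorial (a * q / (b * c * d)) q n)

/-- The ratio between the `(n + 1)`-st and the `n`-th value of either side of Jackson's summation,
in terms of `x = a * q ^ (n + 1)`. -/
noncomputable def jacksonRatio (b c d x : ℂ) : ℂ :=
  (1 - x) * (1 - x / (b * c)) * (1 - x / (b * d)) * (1 - x / (c * d)) /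
    ((1 - x / b) * (1 - x / c) * (1 - x / d) * (1 - x / (b * c * d)))

theorem jacksonProduct_succ (q a b c d : ℂ) (n : ℕ) :
    jacksonProduct q a b c d (n + 1) =
      jacksonProduct q a b c d n * jacksonRatio b c d (a * q ^ (n + 1)) := by
  simp only [jacksonProduct, jacksonRatio, qShiftedFactorial_mul_div_succ,
    qShiftedFactorial_succ (a * q), mul_assoc a q, ← pow_succ', div_mul_div_comm]
  congr 1 <;> ring

theorem contiguousCoeff_swap_eq (hb : b ≠ 0) (hc : c ≠ 0) (hd : d ≠ 0) (he : e ≠ 0)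
    (hf : f ≠ 0) (hbal : a ^ 2 = b * c * d * e * f) (hcoeff : contiguousCoeff a b c d e f ≠ 0) :
    contiguousCoeff a b c d f e =
      contiguousCoeff a b c d e f * jacksonRatio b c d (a / f) := by
  have ha : a ≠ 0 := by rintro rfl; simp [hb, hc, hd, he, hf] at hbal
  obtain rfl : b = a ^ 2 / (c * d * e * f) := by field_simp; linear_combination -hbal
  have hden : contiguousCoeff a (a ^ 2 / (c * d * e * f)) c d e f = -(a * f / e) *
      ((1 - a / f / (a ^ 2 / (c * d * e * f))) * (1 - a / f / c) * (1 - a / f / d) *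
        (1 - a / f / (a ^ 2 / (c * d * e * f) * c * d))) := by
    rw [contiguousCoeff]
    field_simp
    ring
  rw [hden, jacksonRatio, mul_assoc (-(a * f / e)),
    mul_div_cancel₀ _ (right_ne_zero_of_mul (hden ▸ hcoeff)), contiguousCoeff]
  field_simp
  ring

theorem contiguousCoeff_ne_zero (hf : f ≠ 0) (hae : a ≠ e) (hb : a / f ≠ b) (hc : a / f ≠ c)
    (hd : a / f ≠ d) : contiguousCoeff a b c d e f ≠ 0 := by
  have hone_sub {x z : ℂ} (h : x ≠ z) : 1 - x / z ≠ 0 :=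
    sub_ne_zero.2 (div_ne_one_of_ne h).symm
  simp only [contiguousCoeff, mul_comm _ f, ← div_div]
  exact mul_ne_zero (mul_ne_zero (mul_ne_zero (mul_ne_zero hf (hone_sub hae)) (hone_sub hb))
    (hone_sub hc)) (hone_sub hd)

theorem sum_range_eq_sum_range_mul_jacksonRatio (hq : q ≠ 0) (hb : b ≠ 0) (hc : c ≠ 0)
    (hd : d ≠ 0) (he : e ≠ 0) (hf : f ≠ 0) (ha1 : a ≠ 1) (hbal : a ^ 2 = b * c * d * e * f)
    (hden : ∀ z ∈ ({b, c, d, e, f} : Set ℂ), ∀ j ≤ m, a * q ^ j ≠ z)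
    (hcoeff : a / f ∉ ({b, c, d} : Set ℂ)) (hqq : qShiftedFactorial q q m ≠ 0)
    (hterm : qShiftedFactorial (f * q) q m = 0) :
    ∑ k ∈ range (m + 1), veryWellPoisedTerm q a b c d (e * q) f k =
      (∑ k ∈ range m, veryWellPoisedTerm q a b c d e (f * q) k) * jacksonRatio b c d (a / f) := by
  have hne (z) (hz : z ∈ ({b, c, d, e, f} : Set ℂ)) : a ≠ z := by
    simpa using hden z hz 0 m.zero_le
  have hcoeff : contiguousCoeff a b c d e f ≠ 0 := by
    simp only [Set.mem_insert_iff, Set.mem_singleton_iff, not_or] at hcoeff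
    exact contiguousCoeff_ne_zero hf (hne e (by simp)) hcoeff.1 hcoeff.2.1 hcoeff.2.2
  have hz0 : ∀ z ∈ ({b, c, d, e, f} : Set ℂ), z ≠ 0 := by simp [hb, hc, hd, he, hf]
  have hsum := sum_range_contiguousCoeff_mul_sub hq hb hc hd he hf ha1 (hne e (by simp))
    (hne f (by simp)) hbal
    (fun z hz => qShiftedFactorial_mul_div_ne_zero (hz0 z hz) (hden z hz)) hqq
  have hclosed : contiguousPartialSum q a b c d e f m = 0 := by
    rw [contiguousPartialSum, hterm, mul_zero, zero_div]
  have hlast : veryWellPoisedTerm q a b c d e (f * q) m = 0 := by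
    rw [veryWellPoisedTerm, hterm, mul_zero, zero_div, mul_zero, zero_mul]
  rw [hclosed, mul_zero, sum_sub_distrib, ← mul_sum, ← mul_sum,
    sum_range_succ (veryWellPoisedTerm q a b c d e (f * q)), hlast, add_zero,
    contiguousCoeff_swap_eq hb hc hd he hf hbal hcoeff, mul_assoc, ← mul_sub, mul_eq_zero] at hsum
  rw [sub_eq_zero.1 (hsum.resolve_left hcoeff), mul_comm]

theorem jacksonSum_succ (hq : q ≠ 0) (ha : a ≠ 0) (hb : b ≠ 0) (hc : c ≠ 0) (hd : d ≠ 0)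
    (hgen : ∀ z ∈ ({1, b, c, d, b * c * d} : Set ℂ), ∀ j ≤ 2 * (n + 1), a * q ^ j ≠ z)
    (hqq : qShiftedFactorial q q (n + 1) ≠ 0) :
    jacksonSum q a b c d (n + 1) =
      jacksonSum q a b c d n * jacksonRatio b c d (a * q ^ (n + 1)) := by
  obtain ⟨e, he_def⟩ : ∃ e, e = a ^ 2 * q ^ (n + 1) / (b * c * d) := ⟨_, rfl⟩
  obtain ⟨f, hf_def⟩ : ∃ f, f = q ^ (-((n + 1 : ℕ) : ℤ)) := ⟨_, rfl⟩
  have he : e ≠ 0 := by rw [he_def]; positivity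
  have hf_inv : f = (q ^ (n + 1))⁻¹ := by rw [hf_def, zpow_neg, zpow_natCast]
  have hf : f ≠ 0 := by rw [hf_inv]; positivity
  have haf : a / f = a * q ^ (n + 1) := by rw [hf_inv, div_inv_eq_mul]
  have hbal : a ^ 2 = b * c * d * e * f := by rw [hf_inv, he_def]; field_simp
  have heq : e * q = a ^ 2 * q ^ (n + 1 + 1) / (b * c * d) := by rw [he_def]; ring
  have hfq : f * q = q ^ (-(n : ℤ)) := by
    rw [hf_def, Nat.cast_succ, neg_add, ← zpow_add_one₀ hq, neg_add_cancel_right]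
  simp only [Set.mem_insert_iff, Set.mem_singleton_iff, forall_eq_or_imp, forall_eq] at hgen
  obtain ⟨hgen1, hgenb, hgenc, hgend, hgenbcd⟩ := hgen
  have hne_e (j) (hj : j ≤ n + 1) (h : a * q ^ j = e) : False := by
    refine hgenbcd (n + 1 - j) (by lia) (mul_left_cancel₀ he ?_)
    rw [← h, mul_mul_mul_comm, ← pow_add, Nat.add_sub_cancel' hj, h, he_def]
    field_simp
  have hne_f (j) (h : a * q ^ j = f) : a * q ^ (j + (n + 1)) = 1 := by
    rw [pow_add, ← mul_assoc, h, hf_inv, inv_mul_cancel₀ (pow_ne_zero _ hq)]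
  have hrec := sum_range_eq_sum_range_mul_jacksonRatio (m := n + 1) hq hb hc hd he hf
    (by simpa using hgen1 0 (by lia)) hbal
    (by
      rintro z (rfl | rfl | rfl | rfl | rfl) j hj
      exacts [hgenb j (by lia), hgenc j (by lia), hgend j (by lia), hne_e j hj,
        fun h => hgen1 _ (by lia) (hne_f j h)])
    (by
      rw [haf]
      rintro (h | h | h)
      exacts [hgenb _ (by lia) h, hgenc _ (by lia) h, hgend _ (by lia) h]) hqq
    (by rw [hfq, qShiftedFactorial_zpow_neg_eq_zero hq n.lt_succ_self])
  rwa [heq, hfq, haf, he_def, hf_def] at hrec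

theorem jacksonSum_eq_jacksonProduct_of_generic (hq : q ≠ 0) (ha : a ≠ 0) (hb : b ≠ 0)
    (hc : c ≠ 0) (hd : d ≠ 0)
    (hgen : ∀ z ∈ ({1, b, c, d, b * c * d} : Set ℂ), ∀ j ≤ 2 * n, a * q ^ j ≠ z)
    (hqq : qShiftedFactorial q q n ≠ 0) :
    jacksonSum q a b c d n = jacksonProduct q a b c d n := by
  induction n with
  | zero =>
    have ha1 : a ≠ 1 := by simpa using hgen 1 (by simp) 0 le_rfl
    simp [jacksonSum, jacksonProduct, veryWellPoisedTerm_zero ha1, qShiftedFactorial_zero]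
  | succ n ih =>
    rw [jacksonSum_succ hq ha hb hc hd hgen hqq, jacksonProduct_succ,
      ih (fun z hz j hj => hgen z hz j (by lia))
        (left_ne_zero_of_mul (qShiftedFactorial_succ q q n ▸ hqq))]

theorem eventually_nhdsNE_mul_pow_ne (hq : q ≠ 0) (a : ℂ) {s : Set ℂ} (hs : s.Finite) (N : ℕ) :
    ∀ᶠ x in 𝓝[≠] a, ∀ z ∈ s, ∀ j ≤ N, x * q ^ j ≠ z := by
  have hfin : (Set.image2 (fun z j => z / q ^ j) s (Set.Iic N)).Finite :=
    hs.image2 _ (Set.finite_Iic N)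
  filter_upwards [nhdsNE_le_cofinite a hfin.compl_mem_cofinite] with x hx z hz j hj h
  exact hx ⟨z, hz, j, hj, (eq_div_of_mul_eq (pow_ne_zero j hq) h).symm⟩

theorem continuousAt_jacksonSum (hq : q ≠ 0) (ha : a ≠ 0) (hb : b ≠ 0) (hc : c ≠ 0)
    (hd : d ≠ 0) (ha1 : a ≠ 1)
    (hden : ∀ k ≤ n, qShiftedFactorial (a * q / b) q k * qShiftedFactorial (a * q / c) q k *
        qShiftedFactorial (a * q / d) q k *
        qShiftedFactorial (a * q / (a ^ 2 * q ^ (n + 1) / (b * c * d))) q k *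
        qShiftedFactorial (a * q / q ^ (-(n : ℤ))) q k * qShiftedFactorial q q k ≠ 0) :
    ContinuousAt (fun x => jacksonSum q x b c d n) a := by
  have ha1' : 1 - a ≠ 0 := sub_ne_zero.2 ha1.symm
  have he : a ^ 2 * q ^ (n + 1) / (b * c * d) ≠ 0 := by positivity
  have hf : q ^ (-(n : ℤ)) ≠ 0 := zpow_ne_zero _ hq
  have hbcd : b * c * d ≠ 0 := by positivity
  unfold jacksonSum veryWellPoisedTerm
  refine tendsto_finsetSum _ fun k hk => ?_
  have hdenk := hden k (mem_range_succ_iff.1 hk)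
  change ContinuousAt _ _
  fun_prop (disch := assumption)

theorem continuousAt_jacksonProduct (hb : qShiftedFactorial (a * q / b) q n ≠ 0)
    (hc : qShiftedFactorial (a * q / c) q n ≠ 0) (hd : qShiftedFactorial (a * q / d) q n ≠ 0)
    (hbcd : qShiftedFactorial (a * q / (b * c * d)) q n ≠ 0) :
    ContinuousAt (fun x => jacksonProduct q x b c d n) a := by
  unfold jacksonProduct
  fun_prop (disch := simp [*])

theorem mul_div_sq_mul_pow_div (hq : q ≠ 0) (ha : a ≠ 0) (p : ℂ) (n : ℕ) :
    a * q / (a ^ 2 * q ^ (n + 1) / p) = p * q ^ (-(n : ℤ)) / a := by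
  rw [zpow_neg, zpow_natCast]
  field_simp
  ring

theorem mul_div_zpow_neg (a q : ℂ) (n : ℕ) : a * q / q ^ (-(n : ℤ)) = a * q ^ (n + 1) := by
  rw [zpow_neg, zpow_natCast, div_inv_eq_mul, mul_assoc, ← pow_succ']

/-- Jackson's q-analog of Dougall's sum: the summation of a terminating, balanced,
very-well-poised ₈φ₇ basic hypergeometric series. -/
theorem q_dougall (n : ℕ) (q a b c d : ℂ)
    (hq : q ≠ 0) (ha : a ≠ 0) (hb : b ≠ 0) (hc : c ≠ 0) (hd : d ≠ 0) (ha1 : a ≠ 1)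
    (h1 : ∀ k ≤ n, qShiftedFactorial (a * q / b) q k ≠ 0)
    (h2 : ∀ k ≤ n, qShiftedFactorial (a * q / c) q k ≠ 0)
    (h3 : ∀ k ≤ n, qShiftedFactorial (a * q / d) q k ≠ 0)
    (h4 : ∀ k ≤ n, qShiftedFactorial (b * c * d * q ^ (-(n : ℤ)) / a) q k ≠ 0)
    (h5 : ∀ k ≤ n, qShiftedFactorial (a * q ^ (n + 1)) q k ≠ 0)
    (h6 : ∀ k ≤ n, qShiftedFactorial q q k ≠ 0)
    (h7 : qShiftedFactorial (a * q / (b * c * d)) q n ≠ 0) :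
    ∑ k ∈ Finset.range (n + 1),
      ((1 - a * q ^ (2 * k)) / (1 - a)) *
        ((qShiftedFactorial a q k * qShiftedFactorial b q k * qShiftedFactorial c q k *
            qShiftedFactorial d q k *
            qShiftedFactorial (a ^ 2 * q ^ (n + 1) / (b * c * d)) q k *
            qShiftedFactorial (q ^ (-(n : ℤ))) q k) /
          (qShiftedFactorial (a * q / b) q k * qShiftedFactorial (a * q / c) q k *
            qShiftedFactorial (a * q / d) q k *
            qShiftedFactorial (b * c * d * q ^ (-(n : ℤ)) / a) q k *
            qShiftedFactorial (a * q ^ (n + 1)) q k * qShiftedFactorial q q k)) * q ^ k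
      = (qShiftedFactorial (a * q) q n * qShiftedFactorial (a * q / (b * c)) q n *
            qShiftedFactorial (a * q / (b * d)) q n *
            qShiftedFactorial (a * q / (c * d)) q n) /
          (qShiftedFactorial (a * q / b) q n * qShiftedFactorial (a * q / c) q n *
            qShiftedFactorial (a * q / d) q n *
            qShiftedFactorial (a * q / (b * c * d)) q n) := by
  have hden (k) (hk : k ≤ n) := mul_ne_zero (mul_ne_zero (mul_ne_zero (mul_ne_zero (mul_ne_zero
    (h1 k hk) (h2 k hk)) (h3 k hk)) (h4 k hk)) (h5 k hk)) (h6 k hk)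
  simp only [← mul_div_sq_mul_pow_div hq ha, ← mul_div_zpow_neg a] at hden ⊢
  have hgeneric : ∀ᶠ x in 𝓝[≠] a, jacksonSum q x b c d n = jacksonProduct q x b c d n := by
    filter_upwards [eventually_nhdsNE_mul_pow_ne hq a (Set.toFinite {1, b, c, d, b * c * d})
        (2 * n),
      nhdsWithin_le_nhds (eventually_ne_nhds ha)] with x hx hx0
    exact jacksonSum_eq_jacksonProduct_of_generic hq hx0 hb hc hd hx (h6 n le_rfl)
  have hsum := continuousAt_jacksonSum hq ha hb hc hd ha1 hden
  have hprod := continuousAt_jacksonProduct (h1 n le_rfl) (h2 n le_rfl) (h3 n le_rfl) h7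
  exact ((hsum.eventuallyEq_nhds_iff_eventuallyEq_nhdsNE hprod).1 hgeneric).eq_of_nhds
end

section
/- Let n be a natural number and let (a_k) and (b_k) be sequences of complex numbers such that a_0 − b_0 ≠ 0 and (1−a_k)·b_k ≠ 0 for 1 ≤ k ≤ n, and a_0 ≠ 0, 1−b_0 ≠ 0. Then ∑_{k=0}^{n} ((a_k − b_k)/(a_0 − b_0)) · (∏_{j=0}^{k−1} (1−b_j)a_j) / (∏_{j=1}^{k} (1−a_j)b_j) = ((1−b_0)a_0/(a_0 − b_0)) · ( ∏_{j=1}^{n} ((1−b_j)a_j)/((1−a_j)b_j) − ((1−a_0)b_0)/((1−b_0)a_0) ). -/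
theorem prod_range_succ_div_prod_Icc {M : Type*} [DivisionCommMonoid M] (u v : ℕ → M) (n : ℕ) :
    (∏ j ∈ Finset.range (n + 1), u j) / ∏ j ∈ Finset.Icc 1 n, v j =
      u 0 * ∏ j ∈ Finset.Icc 1 n, u j / v j := by
  rw [Finset.prod_range_eq_mul_Ico u n.add_one_pos, Finset.Ico_add_one_right_eq_Icc,
    mul_div_assoc, Finset.prod_div_distrib]

section Field

variable {K : Type*} [Field K]

theorem sub_mul_prod_range_div_prod_Icc_succ (u v : ℕ → K) (k : ℕ) (hv : v (k + 1) ≠ 0) :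
    (u (k + 1) - v (k + 1)) * (∏ j ∈ Finset.range (k + 1), u j) / ∏ j ∈ Finset.Icc 1 (k + 1), v j =
      u 0 * ∏ j ∈ Finset.Icc 1 (k + 1), u j / v j - u 0 * ∏ j ∈ Finset.Icc 1 k, u j / v j := by
  simp only [Finset.prod_Icc_succ_top (Nat.le_add_left 1 k)]
  rw [← mul_assoc, ← prod_range_succ_div_prod_Icc]
  field_simp

/-- Euler's telescoping lemma, cleared of the usual normalising factor `u 0 / (u 0 - v 0)`. -/
theorem sum_sub_mul_prod_range_div_prod_Icc (u v : ℕ → K) (n : ℕ)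
    (hv : ∀ k, 1 ≤ k → k ≤ n → v k ≠ 0) :
    ∑ k ∈ Finset.range (n + 1),
      (u k - v k) * (∏ j ∈ Finset.range k, u j) / ∏ j ∈ Finset.Icc 1 k, v j =
      u 0 * ∏ j ∈ Finset.Icc 1 n, u j / v j - v 0 := by
  have hv_succ (k : ℕ) (hk : k ∈ Finset.range n) : v (k + 1) ≠ 0 :=
    hv (k + 1) (Nat.le_add_left 1 k) (Finset.mem_range.mp hk)
  rw [Finset.sum_range_succ', Finset.sum_congr rfl fun k hk =>
      sub_mul_prod_range_div_prod_Icc_succ u v k (hv_succ k hk),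
    Finset.sum_range_sub fun k => u 0 * ∏ j ∈ Finset.Icc 1 k, u j / v j]
  simp

theorem generalized_chu_vandermonde_general (n : ℕ) (a b : ℕ → K)
    (h0 : a 0 - b 0 ≠ 0)
    (hk : ∀ k, 1 ≤ k → k ≤ n → (1 - a k) * b k ≠ 0)
    (ha0 : a 0 ≠ 0) (hb0 : 1 - b 0 ≠ 0) :
    ∑ k ∈ Finset.range (n + 1),
      ((a k - b k) / (a 0 - b 0)) *
        (∏ j ∈ Finset.range k, (1 - b j) * a j) /
          (∏ j ∈ Finset.Icc 1 k, (1 - a j) * b j)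
      = ((1 - b 0) * a 0 / (a 0 - b 0)) *
          ((∏ j ∈ Finset.Icc 1 n, ((1 - b j) * a j) / ((1 - a j) * b j)) -
            ((1 - a 0) * b 0) / ((1 - b 0) * a 0)) := by
  have sub_eq (k : ℕ) : a k - b k = (1 - b k) * a k - (1 - a k) * b k := by ring
  have euler := sum_sub_mul_prod_range_div_prod_Icc
    (fun k => (1 - b k) * a k) (fun k => (1 - a k) * b k) n hk
  simp only [← sub_eq] at euler
  simp only [div_mul_eq_mul_div, div_right_comm _ (a 0 - b 0), ← Finset.sum_div]
  rw [euler, div_left_inj' h0, mul_sub, mul_div_cancel₀ _ (mul_ne_zero hb0 ha0)]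

end Field

/-- An extension of Ramanujan's identity (generalized hypergeometric series):
follows from Euler's Telescoping Lemma applied to
`(1−b_k)a_k − (1−a_k)b_k = a_k − b_k`. -/
theorem generalized_chu_vandermonde (n : ℕ) (a b : ℕ → ℂ)
    (h0 : a 0 - b 0 ≠ 0)
    (hk : ∀ k, 1 ≤ k → k ≤ n → (1 - a k) * b k ≠ 0)
    (ha0 : a 0 ≠ 0) (hb0 : 1 - b 0 ≠ 0) :
    ∑ k ∈ Finset.range (n + 1),
      ((a k - b k) / (a 0 - b 0)) *
        (∏ j ∈ Finset.range k, (1 - b j) * a j) /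
          (∏ j ∈ Finset.Icc 1 k, (1 - a j) * b j)
      = ((1 - b 0) * a 0 / (a 0 - b 0)) *
          ((∏ j ∈ Finset.Icc 1 n, ((1 - b j) * a j) / ((1 - a j) * b j)) -
            ((1 - a 0) * b 0) / ((1 - b 0) * a 0)) :=
  generalized_chu_vandermonde_general n a b h0 hk ha0 hb0
end

section
/- Let (a_n) and (b_n) be sequences of complex numbers with a_n ≠ 0 and b_n ≠ 0 for all n, and let (x_n) satisfy x_{n+2} = a_n x_{n+1} + b_n x_n for all n ≥ 0, with x_2 ≠ 0. Then for every natural number n, ∑_{k=1}^{n} (b_k / (a_1 a_2 ⋯ a_k)) · (x_k / x_2) = x_{n+2} / (a_1 a_2 ⋯ a_n · x_2) − 1. -/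
/-!
Dividing the recurrence `x_{k+2} = a_k x_{k+1} + b_k x_k` by `a_m ⋯ a_k` exhibits each summand
`b_k x_k / (a_m ⋯ a_k)` as the increment of `x_{k+1} / (a_m ⋯ a_{k-1})`, so the sum telescopes.
-/

open Finset

section Module

variable {K V : Type*} [Field K] [AddCommGroup V] [Module K V] {a b : ℕ → K} {x : ℕ → V}

theorem div_prod_Icc_smul_eq_sub {m k : ℕ} (hmk : m ≤ k) (ha : a k ≠ 0)
    (hrec : x (k + 2) = a k • x (k + 1) + b k • x k) :
    (b k / ∏ j ∈ Icc m k, a j) • x k =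
      (∏ j ∈ Icc m k, a j)⁻¹ • x (k + 2) - (∏ j ∈ Ico m k, a j)⁻¹ • x (k + 1) := by
  have hprod : (∏ j ∈ Icc m k, a j)⁻¹ * a k = (∏ j ∈ Ico m k, a j)⁻¹ := by
    rw [← prod_Ico_mul_eq_prod_Icc hmk, mul_inv, inv_mul_cancel_right₀ ha]
  rw [hrec, smul_add, smul_smul, smul_smul, hprod, add_sub_cancel_left, div_eq_inv_mul]

theorem sum_Icc_div_prod_smul_eq_sub {m n : ℕ} (hmn : m ≤ n + 1) (ha : ∀ k ∈ Icc m n, a k ≠ 0)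
    (hrec : ∀ k ∈ Icc m n, x (k + 2) = a k • x (k + 1) + b k • x k) :
    ∑ k ∈ Icc m n, (b k / ∏ j ∈ Icc m k, a j) • x k =
      (∏ j ∈ Icc m n, a j)⁻¹ • x (n + 2) - x (m + 1) := by
  let y (k : ℕ) : V := (∏ j ∈ Ico m k, a j)⁻¹ • x (k + 1)
  calc ∑ k ∈ Icc m n, (b k / ∏ j ∈ Icc m k, a j) • x k
      = ∑ k ∈ Icc m n, (y (k + 1) - y k) := sum_congr rfl fun k hk ↦
        div_prod_Icc_smul_eq_sub (mem_Icc.mp hk).1 (ha k hk) (hrec k hk)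
    _ = y (n + 1) - y m := sum_Ico_sub y hmn
    _ = (∏ j ∈ Icc m n, a j)⁻¹ • x (n + 2) - x (m + 1) := by
        simp [y, Ico_add_one_right_eq_Icc]

end Module

theorem three_term_sum_general {K : Type*} [Field K] {a b x : ℕ → K} {n : ℕ}
    (ha : ∀ k ∈ Icc 1 n, a k ≠ 0)
    (hrec : ∀ k ∈ Icc 1 n, x (k + 2) = a k * x (k + 1) + b k * x k) (hx2 : x 2 ≠ 0) :
    ∑ k ∈ Icc 1 n, (b k / ∏ j ∈ Icc 1 k, a j) * (x k / x 2) =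
      x (n + 2) / ((∏ j ∈ Icc 1 n, a j) * x 2) - 1 := by
  calc ∑ k ∈ Icc 1 n, (b k / ∏ j ∈ Icc 1 k, a j) * (x k / x 2)
      = (∑ k ∈ Icc 1 n, (b k / ∏ j ∈ Icc 1 k, a j) • x k) / x 2 := by
        simp only [sum_div, smul_eq_mul, mul_div_assoc]
    _ = ((∏ j ∈ Icc 1 n, a j)⁻¹ • x (n + 2) - x 2) / x 2 := by
        rw [sum_Icc_div_prod_smul_eq_sub (Nat.le_add_left 1 n) ha hrec]
    _ = x (n + 2) / ((∏ j ∈ Icc 1 n, a j) * x 2) - 1 := by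
        rw [sub_div, div_self hx2, smul_eq_mul, inv_mul_eq_div, div_div]

/-- Identity (33) of the Theorem on three-term recurrence relations
(generalizing Lucas's `∑_{k=1}^n F_k = F_{n+2} − 1`):
`∑_{k=1}^{n} (b_k/(a_1⋯a_k))·(x_k/x_2) = x_{n+2}/(a_1⋯a_n · x_2) − 1`. -/
theorem three_term_sum (a b x : ℕ → ℂ)
    (ha : ∀ k, a k ≠ 0) (hb : ∀ k, b k ≠ 0)
    (hrec : ∀ m, x (m + 2) = a m * x (m + 1) + b m * x m)
    (hx2 : x 2 ≠ 0) (n : ℕ) :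
    ∑ k ∈ Finset.Icc 1 n, (b k / (∏ j ∈ Finset.Icc 1 k, a j)) * (x k / x 2)
      = x (n + 2) / ((∏ j ∈ Finset.Icc 1 n, a j) * x 2) - 1 :=
  three_term_sum_general (fun k _ ↦ ha k) (fun k _ ↦ hrec k) hx2
end

section
/- Let (a_n) and (b_n) be sequences of complex numbers with a_n ≠ 0 and b_n ≠ 0 for all n, and let (x_n) satisfy x_{n+2} = a_n x_{n+1} + b_n x_n for all n ≥ 0, with x_1 ≠ 0 and x_2 ≠ 0. Then for every natural number n, ∑_{k=1}^{n} (a_k / (b_1 b_2 ⋯ b_k)) · (x_{k+1}² / (x_1 x_2)) = x_{n+1} x_{n+2} / (b_1 b_2 ⋯ b_n · x_1 x_2) − 1. -/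
/-!
For `P k = ∏ j ∈ [m, k), b j` and `t k = x k * x (k + 1) / P k`, multiplying the recurrence
`a k * x (k + 1) = x (k + 2) - b k * x k` by `x (k + 1) / P (k + 1)` exhibits each summand as
the increment `t (k + 1) - t k`, so the sum telescopes.
-/

section ThreeTermRecurrence

variable {K : Type*} [Field K] {a b x : ℕ → K} {m : ℕ}

theorem div_prod_Ico_mul_sq_eq_sub_of_recurrence {k : ℕ} (hmk : m ≤ k) (hbk : b k ≠ 0)
    (hrec : x (k + 2) = a k * x (k + 1) + b k * x k) :
    a k / (∏ j ∈ Finset.Ico m (k + 1), b j) * x (k + 1) ^ 2 =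
      x (k + 1) * x (k + 2) / (∏ j ∈ Finset.Ico m (k + 1), b j) -
        x k * x (k + 1) / (∏ j ∈ Finset.Ico m k, b j) := by
  rw [Finset.prod_Ico_succ_top hmk, ← mul_div_mul_right (x k * x (k + 1)) _ hbk, hrec]
  ring

theorem sum_Ico_div_prod_Ico_mul_sq_of_recurrence {n : ℕ} (hmn : m ≤ n)
    (hb : ∀ k ∈ Finset.Ico m n, b k ≠ 0)
    (hrec : ∀ k ∈ Finset.Ico m n, x (k + 2) = a k * x (k + 1) + b k * x k) :
    ∑ k ∈ Finset.Ico m n, a k / (∏ j ∈ Finset.Ico m (k + 1), b j) * x (k + 1) ^ 2 =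
      x n * x (n + 1) / (∏ j ∈ Finset.Ico m n, b j) - x m * x (m + 1) := by
  let t : ℕ → K := fun k ↦ x k * x (k + 1) / ∏ j ∈ Finset.Ico m k, b j
  calc
    _ = ∑ k ∈ Finset.Ico m n, (t (k + 1) - t k) :=
      Finset.sum_congr rfl fun k hk ↦ div_prod_Ico_mul_sq_eq_sub_of_recurrence
        (Finset.mem_Ico.mp hk).1 (hb k hk) (hrec k hk)
    _ = t n - t m := Finset.sum_Ico_sub t hmn
    _ = _ := by simp [t]

end ThreeTermRecurrence

theorem three_term_sum_of_squares_general {K : Type*} [Field K] {a b x : ℕ → K}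
    (hb : ∀ k, 1 ≤ k → b k ≠ 0)
    (hrec : ∀ k, 1 ≤ k → x (k + 2) = a k * x (k + 1) + b k * x k)
    (hx1 : x 1 ≠ 0) (hx2 : x 2 ≠ 0) (n : ℕ) :
    ∑ k ∈ Finset.Icc 1 n, a k / (∏ j ∈ Finset.Icc 1 k, b j) * (x (k + 1) ^ 2 / (x 1 * x 2)) =
      x (n + 1) * x (n + 2) / ((∏ j ∈ Finset.Icc 1 n, b j) * (x 1 * x 2)) - 1 := by
  have undivided :
      ∑ k ∈ Finset.Icc 1 n, a k / (∏ j ∈ Finset.Icc 1 k, b j) * x (k + 1) ^ 2 =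
        x (n + 1) * x (n + 2) / (∏ j ∈ Finset.Icc 1 n, b j) - x 1 * x 2 := by
    simpa only [Finset.Ico_add_one_right_eq_Icc] using
      sum_Ico_div_prod_Ico_mul_sq_of_recurrence (Nat.le_add_left 1 n)
        (fun k hk ↦ hb k (Finset.mem_Ico.mp hk).1) (fun k hk ↦ hrec k (Finset.mem_Ico.mp hk).1)
  simp_rw [← mul_div_assoc]
  rw [← Finset.sum_div, undivided, sub_div, div_div, div_self (mul_ne_zero hx1 hx2)]

/-- Identity (36) of the Theorem on three-term recurrence relations
(generalizing the Fibonacci identity `∑_{k=1}^n F_k² = F_n F_{n+1}`):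
`∑_{k=1}^{n} (a_k/(b_1⋯b_k))·(x_{k+1}²/(x_1 x_2)) = x_{n+1}x_{n+2}/(b_1⋯b_n · x_1 x_2) − 1`. -/
theorem three_term_sum_of_squares (a b x : ℕ → ℂ)
    (ha : ∀ k, a k ≠ 0) (hb : ∀ k, b k ≠ 0)
    (hrec : ∀ m, x (m + 2) = a m * x (m + 1) + b m * x m)
    (hx1 : x 1 ≠ 0) (hx2 : x 2 ≠ 0) (n : ℕ) :
    ∑ k ∈ Finset.Icc 1 n,
      (a k / (∏ j ∈ Finset.Icc 1 k, b j)) * ((x (k + 1)) ^ 2 / (x 1 * x 2))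
      = x (n + 1) * x (n + 2) / ((∏ j ∈ Finset.Icc 1 n, b j) * (x 1 * x 2)) - 1 :=
  three_term_sum_of_squares_general (fun k _ ↦ hb k) (fun k _ ↦ hrec k) hx1 hx2 n
end
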